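/- arXiv:1809.05926 — 5 statements merged into one kernel-verified Lean document; each statement's English description precedes it below -/
import Mathlib

section
/- Let T be a finite tree and suppose T is k'-metric antidimensional (i.e., k' is the largest positive integer such that T has a k'-antiresolving set). Then for every integer k with 1 ≤ k ≤ k' there exists a k-antiresolving set for T. -/
/-!
Let `S` be `k'`-antiresolving with `k' ≥ 2`, let `a ∈ S` have a neighbour outside `S`, and let `B` be
the set of neighbours of `a` outside `S`. For `b ∈ B`, write `branch T a b` for the component of `b`
in `T - a`.

* Such a branch is disjoint from `S`: a vertex `s ∈ S` in it would make the class of `b` a singleton,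
  since `b` is the only neighbour of `a` on the side of `s`.
* A class of `S` meeting one of these branches stays inside their union and at constant distance
  from `a`. Hence every nonempty level of the union of the branches has at least `k'` vertices; in
  particular `k' ≤ |B|`, by looking at level one.

For `1 ≤ k < k'` let `K ⊆ B` consist of `k` branches of greatest height, and let `S'` be the complement
of their union `U`. As `a` separates `U` from `S'`, the classes of `S'` are exactly the levels of `U`.
A level met by all the branches of `K` has at least `k` vertices. A level missed by some branch of
`K` lies above the height of that branch, so above all the discarded branches; it is thus a full level
of the union over `B`, with at least `k' > k` vertices. Level one is `K`, with exactly `k` vertices.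
-/

/-- Two vertices have the same metric representation with respect to `S`. -/
def sameRep {V : Type*} (G : SimpleGraph V) (S : Set V) (u w : V) : Prop :=
  ∀ s ∈ S, G.dist u s = G.dist w s

/-- The equivalence class of `u` (among vertices outside `S`) under the
equal-metric-representation relation with respect to `S`. -/
def eqClass {V : Type*} (G : SimpleGraph V) (S : Set V) (u : V) : Set V :=
  {w | w ∉ S ∧ sameRep G S u w}

/-- `S` is a `k`-antiresolving set of `G`: `S` is a nonempty proper subset of the
vertex set, every equivalence class of the equal-metric-representation relation on
the complement of `S` has size at least `k`, and some class has size exactly `k`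
(so `k` is the minimum class size). -/
def IsAntiresolving {V : Type*} (G : SimpleGraph V) (S : Set V) (k : ℕ) : Prop :=
  S.Nonempty ∧ S ≠ Set.univ ∧
    (∀ u ∉ S, k ≤ (eqClass G S u).ncard) ∧
    (∃ u, u ∉ S ∧ (eqClass G S u).ncard = k)

/-- `G` is `k'`-metric antidimensional: `k'` is the largest positive integer such
that `G` has a `k'`-antiresolving set. -/
def IsMetricAntidimensional {V : Type*} (G : SimpleGraph V) (k' : ℕ) : Prop :=
  0 < k' ∧ (∃ S : Set V, IsAntiresolving G S k') ∧
    ∀ k : ℕ, (∃ S : Set V, IsAntiresolving G S k) → k ≤ k'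

namespace TreeAntiresolving

variable {V : Type*}

/-- The branch at `a` through `b`: the vertices having a geodesic to `a` that ends with the edge from
`b` to `a`. In a tree with `b` adjacent to `a` this is the component of `b` after deleting `a`. -/
def branch (T : SimpleGraph V) (a b : V) : Set V :=
  {v | T.dist v a = T.dist v b + 1}

/-- The largest distance from `a` attained in the branch at `a` through `b` (`0` if it is empty). -/
noncomputable def branchHeight [Fintype V] (T : SimpleGraph V) (a b : V) : ℕ :=
  open Classical in (Finset.univ.filter (· ∈ branch T a b)).sup (fun v => T.dist v a)

/-- The vertices at distance `d` from `a` in the branches at `a` through the elements of `K`. -/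
def level (T : SimpleGraph V) (a : V) (K : Set V) (d : ℕ) : Set V :=
  {w | (∃ b ∈ K, w ∈ branch T a b) ∧ T.dist w a = d}

variable {T : SimpleGraph V}

lemma self_mem_branch {a b : V} (hab : T.Adj b a) : b ∈ branch T a b := by
  simp [branch, SimpleGraph.dist_eq_one_iff_adj.mpr hab]

lemma notMem_branch_root {a b : V} : a ∉ branch T a b := by
  simp [branch]

lemma length_eq_dist (hT : T.IsTree) {u v : V} {p : T.Walk u v} (hp : p.IsPath) :
    p.length = T.dist u v := by
  obtain ⟨q, hq, hql⟩ := hT.connected.exists_path_of_dist u v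
  have := (hT.isAcyclic.subsingleton_path u v).elim ⟨p, hp⟩ ⟨q, hq⟩
  rw [Subtype.mk.injEq] at this
  rw [this, hql]

lemma dist_add_of_mem_support {u v x : V} {p : T.Walk u v}
    (hT : T.IsTree) (hp : p.length = T.dist u v) (hx : x ∈ p.support) :
    T.dist u x + T.dist x v = T.dist u v := by
  classical
  have h1 := congrArg SimpleGraph.Walk.length (p.take_spec hx)
  rw [SimpleGraph.Walk.length_append] at h1
  have h2 := SimpleGraph.dist_le (p.takeUntil x hx)
  have h3 := SimpleGraph.dist_le (p.dropUntil x hx)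
  have h4 := hT.connected.dist_triangle (u := u) (v := x) (w := v)
  omega

/-- In a tree, distinct branches at `a` are disjoint. -/
lemma branch_unique (hT : T.IsTree) {a b c v : V} (hb : T.Adj b a) (hc : T.Adj c a)
    (hvb : v ∈ branch T a b) (hvc : v ∈ branch T a c) : b = c := by
  obtain ⟨p, hp⟩ := hT.connected.exists_walk_length_eq_dist v b
  obtain ⟨q, hq⟩ := hT.connected.exists_walk_length_eq_dist v c
  have hp' : (p.concat hb).IsPath := SimpleGraph.Walk.isPath_of_length_eq_dist _ (by
    rw [SimpleGraph.Walk.length_concat, hp]; exact hvb.symm)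
  have hq' : (q.concat hc).IsPath := SimpleGraph.Walk.isPath_of_length_eq_dist _ (by
    rw [SimpleGraph.Walk.length_concat, hq]; exact hvc.symm)
  have := (hT.isAcyclic.subsingleton_path v a).elim ⟨_, hp'⟩ ⟨_, hq'⟩
  rw [Subtype.mk.injEq] at this
  exact (SimpleGraph.Walk.concat_inj this).1

/-- In a tree, `a` separates each branch at `a` from the rest of the tree. -/
lemma dist_through (hT : T.IsTree) {a b w s : V} (hb : T.Adj b a)
    (hw : w ∈ branch T a b) (hs : s ∉ branch T a b) :
    T.dist w s = T.dist w a + T.dist a s := by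
  have hw' : T.dist w a = T.dist w b + 1 := hw
  obtain ⟨p, hp, hpl⟩ := hT.connected.exists_path_of_dist w b
  obtain ⟨q, hq, hql⟩ := hT.connected.exists_path_of_dist a s
  have key : (p.append (SimpleGraph.Walk.cons hb q)).IsPath := by
    rw [SimpleGraph.Walk.isPath_def, SimpleGraph.Walk.support_append,
      SimpleGraph.Walk.support_cons, List.tail_cons]
    refine List.Nodup.append hp.support_nodup hq.support_nodup ?_
    intro x hxp hxq
    -- A common vertex `x` would lie in the branch, and so would `s`, which lies beyond it.
    have h1 := dist_add_of_mem_support hT hpl hxp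
    have h2 := dist_add_of_mem_support hT hql hxq
    have h3 := hT.connected.dist_triangle (u := w) (v := x) (w := a)
    have h4 := hT.connected.dist_triangle (u := s) (v := x) (w := b)
    have h5 := hT.connected.dist_triangle (u := s) (v := b) (w := a)
    have h6 := SimpleGraph.dist_eq_one_iff_adj.mpr hb
    rw [T.dist_comm (u := a) (v := x), T.dist_comm (u := x) (v := s),
      T.dist_comm (u := a) (v := s)] at h2
    apply hs
    change T.dist s a = T.dist s b + 1
    omega
  have := length_eq_dist hT key
  rw [SimpleGraph.Walk.length_append, SimpleGraph.Walk.length_cons] at this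
  omega

/-- Every vertex other than `a` lies in some branch at `a`. -/
lemma exists_branch (hT : T.IsTree) {a w : V} (h : w ≠ a) :
    ∃ b, T.Adj b a ∧ w ∈ branch T a b := by
  obtain ⟨p, hp⟩ := hT.connected.exists_walk_length_eq_dist a w
  cases p with
  | nil => exact absurd rfl h
  | @cons _ b _ hab q =>
    refine ⟨b, hab.symm, ?_⟩
    change T.dist w a = T.dist w b + 1
    have h1 := SimpleGraph.dist_le q
    have h2 := hT.connected.dist_triangle (u := a) (v := b) (w := w)
    have h3 := SimpleGraph.dist_eq_one_iff_adj.mpr hab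
    rw [SimpleGraph.Walk.length_cons] at hp
    rw [T.dist_comm (u := w) (v := a), T.dist_comm (u := w) (v := b)]
    omega

/-- A branch meets every level between one and the level of any of its vertices. -/
lemma exists_mem_branch_dist (hT : T.IsTree) {a b : V} (hb : T.Adj b a) {d : ℕ} (hd : 1 ≤ d) (n : ℕ) :
    ∀ v, T.dist v b = n → v ∈ branch T a b → d ≤ T.dist v a →
      ∃ w ∈ branch T a b, T.dist w a = d := by
  induction n with
  | zero =>
    intro v hv hvb hdv
    refine ⟨v, hvb, ?_⟩
    have : T.dist v a = T.dist v b + 1 := hvb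
    omega
  | succ n ih =>
    intro v hv hvb hdv
    have hvb' : T.dist v a = T.dist v b + 1 := hvb
    by_cases hde : T.dist v a = d
    · exact ⟨v, hvb, hde⟩
    obtain ⟨p, hp⟩ := hT.connected.exists_walk_length_eq_dist v b
    cases p with
    | nil => simp at hv
    | @cons _ x _ hvx q =>
      rw [SimpleGraph.Walk.length_cons] at hp
      have h1 := SimpleGraph.dist_le q
      have h2 := hT.connected.dist_triangle (u := v) (v := x) (w := b)
      have h3 := SimpleGraph.dist_eq_one_iff_adj.mpr hvx
      have h4 := hT.connected.dist_triangle (u := v) (v := x) (w := a)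
      have h5 := hT.connected.dist_triangle (u := x) (v := b) (w := a)
      have h6 := SimpleGraph.dist_eq_one_iff_adj.mpr hb
      have hx : T.dist x a = T.dist x b + 1 := by omega
      exact ih x (by omega) hx (by omega)

lemma dist_le_branchHeight [Fintype V] {a b v : V} (hv : v ∈ branch T a b) :
    T.dist v a ≤ branchHeight T a b := by
  classical
  unfold branchHeight
  exact Finset.le_sup (f := fun v => T.dist v a) (by simpa using hv)

lemma exists_mem_branch_of_le [Fintype V] (hT : T.IsTree) {a b : V} (hb : T.Adj b a) {d : ℕ}
    (hd : 1 ≤ d) (h : d ≤ branchHeight T a b) : ∃ w ∈ branch T a b, T.dist w a = d := by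
  classical
  unfold branchHeight at h
  obtain ⟨v, hv, hdv⟩ := (Finset.le_sup_iff (by simpa [Nat.pos_iff_ne_zero, Nat.one_le_iff_ne_zero] using hd)).mp h
  exact exists_mem_branch_dist hT hb hd _ v rfl (by simpa using hv) hdv

lemma exists_top_subset {α : Type*} [DecidableEq α] (f : α → ℕ) (B : Finset α) (k : ℕ)
    (hk : k ≤ B.card) :
    ∃ K ⊆ B, K.card = k ∧ ∀ b ∈ K, ∀ c ∈ B, c ∉ K → f c ≤ f b := by
  induction k with
  | zero => exact ⟨∅, by simp, by simp, by simp⟩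
  | succ k ih =>
    obtain ⟨K, hKB, hKc, hK⟩ := ih (by omega)
    have hne : (B \ K).Nonempty := by
      rw [← Finset.card_pos, Finset.card_sdiff_of_subset hKB]
      omega
    obtain ⟨m, hm, hmax⟩ := Finset.exists_max_image (B \ K) f hne
    rw [Finset.mem_sdiff] at hm
    refine ⟨insert m K, Finset.insert_subset hm.1 hKB, ?_, ?_⟩
    · rw [Finset.card_insert_of_notMem hm.2, hKc]
    · intro b hb c hc hcK
      rw [Finset.mem_insert, not_or] at hcK
      rcases Finset.mem_insert.mp hb with rfl | hb
      · exact hmax c (Finset.mem_sdiff.mpr ⟨hc, hcK.2⟩)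
      · exact hK b hb c hc hcK.2

/-- If `S` has no singleton class, then the branches leaving `S` are disjoint from `S`; so `S` induces
a subtree. -/
lemma branch_disjoint [Fintype V] (hT : T.IsTree) {S : Set V} {a b v : V} (ha : a ∈ S) (hb : T.Adj b a)
    (h2 : 2 ≤ (eqClass T S b).ncard) (hv : v ∈ branch T a b) : v ∉ S := by
  intro hvS
  have hsub : eqClass T S b ⊆ {b} := by
    rintro w ⟨-, hw⟩
    have h1 := hw a ha
    rw [SimpleGraph.dist_eq_one_iff_adj.mpr hb] at h1
    have hwa := SimpleGraph.dist_eq_one_iff_adj.mp h1.symm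
    have hwv : v ∈ branch T a w := by
      have := hw v hvS
      have hv' : T.dist v a = T.dist v b + 1 := hv
      change T.dist v a = T.dist v w + 1
      rw [T.dist_comm (u := v) (v := w), ← this, T.dist_comm (u := b), hv']
    exact branch_unique hT hwa hb hwv hv
  have := Set.ncard_le_ncard hsub
  rw [Set.ncard_singleton] at this
  omega

/-- A class of `S` meeting a branch leaving `S` at `a` is contained in a level of the union of all
such branches. -/
lemma eqClass_subset_level (hT : T.IsTree) {S : Set V} {a b u : V} (ha : a ∈ S) (hb : T.Adj b a)
    (hbS : b ∉ S) (hu : u ∈ branch T a b) :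
    eqClass T S u ⊆ level T a {c | T.Adj c a ∧ c ∉ S} (T.dist u a) := by
  rintro w ⟨hwS, hw⟩
  have hwa : w ≠ a := fun h => hwS (h ▸ ha)
  obtain ⟨c, hc, hwc⟩ := exists_branch hT hwa
  refine ⟨⟨c, ⟨hc, fun hcS => hbS ?_⟩, hwc⟩, (hw a ha).symm⟩
  have huc : u ∈ branch T a c := by
    change T.dist u a = T.dist u c + 1
    rw [hw a ha, hw c hcS]
    exact hwc
  rwa [branch_unique hT hb hc hu huc]

/-- If `K` is a set of neighbours of `a`, the classes of the complement of the union of the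
corresponding branches are the levels of this union. -/
lemma eqClass_compl_branches (hT : T.IsTree) {a u : V} {K : Set V} (hK : ∀ b ∈ K, T.Adj b a)
    (hu : ∃ b ∈ K, u ∈ branch T a b) :
    eqClass T {v | ¬ ∃ b ∈ K, v ∈ branch T a b} u = level T a K (T.dist u a) := by
  have through : ∀ w, (∃ b ∈ K, w ∈ branch T a b) → ∀ s, (¬ ∃ b ∈ K, s ∈ branch T a b) →
      T.dist w s = T.dist w a + T.dist a s := by
    rintro w ⟨b, hb, hw⟩ s hs
    exact dist_through hT (hK b hb) hw (fun h => hs ⟨b, hb, h⟩)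
  ext w
  constructor
  · rintro ⟨hw, hrep⟩
    exact ⟨not_not.mp hw, (hrep a (fun ⟨b, _, h⟩ => notMem_branch_root h)).symm⟩
  · rintro ⟨hw, hd⟩
    refine ⟨not_not.mpr hw, fun s hs => ?_⟩
    rw [through u hu s hs, through w hw s hs, hd]

lemma level_one (hT : T.IsTree) {a : V} {K : Set V} (hK : ∀ b ∈ K, T.Adj b a) :
    level T a K 1 = K := by
  ext w
  constructor
  · rintro ⟨⟨b, hb, hw⟩, hd⟩
    have hw' : T.dist w a = T.dist w b + 1 := hw
    have : w = b := hT.connected.dist_eq_zero_iff.mp (by omega)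
    exact this ▸ hb
  · intro hw
    exact ⟨⟨w, hw, self_mem_branch (hK w hw)⟩, SimpleGraph.dist_eq_one_iff_adj.mpr (hK w hw)⟩

/-- A level met by every branch of `K` has at least one vertex per branch. -/
lemma card_le_ncard_level [Finite V] (hT : T.IsTree) {a : V} {K : Set V} (hK : ∀ b ∈ K, T.Adj b a)
    {d : ℕ} (h : ∀ b ∈ K, ∃ w ∈ branch T a b, T.dist w a = d) : K.ncard ≤ (level T a K d).ncard := by
  choose! f hf hfd using h
  refine Set.ncard_le_ncard_of_injOn f (fun b hb => ⟨⟨b, hb, hf b hb⟩, hfd b hb⟩) ?_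
  intro b hb c hc hbc
  exact branch_unique hT (hK b hb) (hK c hc) (hf b hb) (hbc ▸ hf c hc)

end TreeAntiresolving

open TreeAntiresolving in
/-- If `T` is a finite `k'`-metric antidimensional tree, then for every
`1 ≤ k ≤ k'` there exists a `k`-antiresolving set for `T`. -/
theorem tree_antiresolving_all_k {V : Type*} [Fintype V] (T : SimpleGraph V)
    (hT : T.IsTree) (k' : ℕ) (hk' : IsMetricAntidimensional T k') :
    ∀ k : ℕ, 1 ≤ k → k ≤ k' → ∃ S : Set V, IsAntiresolving T S k := by
  classical
  intro k hk1 hkk'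
  obtain ⟨-, ⟨S, hS⟩, -⟩ := hk'
  rcases eq_or_lt_of_le hkk' with rfl | hlt
  · exact ⟨S, hS⟩
  obtain ⟨⟨s, hs⟩, hSne, hmin, -⟩ := hS
  obtain ⟨t, ht⟩ := (Set.ne_univ_iff_exists_notMem S).mp hSne
  obtain ⟨p⟩ := hT.connected.preconnected s t
  obtain ⟨⟨⟨a, b₀⟩, hab₀⟩, -, ha, hb₀⟩ := p.exists_boundary_dart S hs ht
  dsimp only at ha hb₀ hab₀
  set B : Set V := {c | T.Adj c a ∧ c ∉ S} with hB
  have hb₀B : b₀ ∈ B := ⟨hab₀.symm, hb₀⟩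
  have hBadj : ∀ b ∈ B, T.Adj b a := fun b hb => hb.1
  have hlevel : ∀ b ∈ B, ∀ u ∈ branch T a b, k' ≤ (level T a B (T.dist u a)).ncard := by
    intro b hb u hu
    have huS := branch_disjoint hT ha hb.1 (le_trans (by omega) (hmin b hb.2)) hu
    exact (hmin u huS).trans (Set.ncard_le_ncard (eqClass_subset_level hT ha hb.1 hb.2 hu))
  have hBcard : k' ≤ B.ncard := by
    have := hlevel b₀ hb₀B b₀ (self_mem_branch hab₀.symm)
    rwa [SimpleGraph.dist_eq_one_iff_adj.mpr hab₀.symm, level_one hT hBadj] at this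
  obtain ⟨K, hKB, hKcard, hKtop⟩ := exists_top_subset (branchHeight T a) B.toFinset k
    (by rw [← Set.ncard_eq_toFinset_card']; omega)
  have hKB' : ∀ b ∈ (K : Set V), b ∈ B := fun b hb => by simpa using hKB hb
  have hKadj : ∀ b ∈ (K : Set V), T.Adj b a := fun b hb => (hKB' b hb).1
  obtain ⟨b₁, hb₁⟩ : K.Nonempty := by rw [← Finset.card_pos]; omega
  have hb₁U : ∃ b ∈ (K : Set V), b₁ ∈ branch T a b := ⟨b₁, hb₁, self_mem_branch (hKadj b₁ hb₁)⟩
  refine ⟨{v | ¬ ∃ b ∈ (K : Set V), v ∈ branch T a b}, ⟨a, fun ⟨b, _, h⟩ => notMem_branch_root h⟩,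
    ?_, ?_, b₁, not_not.mpr hb₁U, ?_⟩
  · exact (Set.ne_univ_iff_exists_notMem _).mpr ⟨b₁, not_not.mpr hb₁U⟩
  · intro u hu
    have hu' := not_not.mp hu
    rw [eqClass_compl_branches hT hKadj hu']
    obtain ⟨b, hb, hub⟩ := hu'
    by_cases hall : ∀ b ∈ (K : Set V), ∃ w ∈ branch T a b, T.dist w a = T.dist u a
    · simpa [hKcard] using card_le_ncard_level hT hKadj hall
    · push Not at hall
      obtain ⟨b₂, hb₂, hmiss⟩ := hall
      have hu1 : 1 ≤ T.dist u a := by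
        have : T.dist u a = T.dist u b + 1 := hub
        omega
      have hheight : branchHeight T a b₂ < T.dist u a := by
        by_contra hcon
        obtain ⟨w, hw, hwd⟩ := exists_mem_branch_of_le hT (hKadj b₂ hb₂) hu1 (not_lt.mp hcon)
        exact hmiss w hw hwd
      refine hlt.le.trans ((hlevel b (hKB' b hb) u hub).trans (Set.ncard_le_ncard ?_))
      rintro w ⟨⟨c, hc, hw⟩, hwd⟩
      refine ⟨⟨c, ?_, hw⟩, hwd⟩
      by_contra hcK
      have h1 := hKtop b₂ hb₂ c (by simpa using hc) hcK
      have h2 := dist_le_branchHeight hw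
      omega
  · rw [eqClass_compl_branches hT hKadj hb₁U, SimpleGraph.dist_eq_one_iff_adj.mpr (hKadj b₁ hb₁),
      level_one hT hKadj, Set.ncard_coe_finset, hKcard]
end

section
/- Let T be a finite tree with vertex set V and let S ⊂ V be a k-antiresolving set of T with k ≥ 2. Then the subgraph of T induced by S is connected. -/
/-- A vertex on the geodesic from `x` to `y` in an acyclic connected graph is determined by its
distances to `x` and `y`. -/
lemma eq_of_mem_support_of_dist_eq {V : Type*} {T : SimpleGraph V} (hT : T.IsTree)
    {x y v w : V} (p : T.Walk x y) (hp : p.length = T.dist x y) (hv : v ∈ p.support)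
    (hx : T.dist v x = T.dist w x) (hy : T.dist v y = T.dist w y) : v = w := by
  classical
  have hsplit := congrArg SimpleGraph.Walk.length (p.take_spec hv)
  rw [SimpleGraph.Walk.length_append] at hsplit
  have h1 := SimpleGraph.dist_le (p.takeUntil v hv)
  have h2 := SimpleGraph.dist_le (p.dropUntil v hv)
  have h3 := hT.1.dist_triangle (u := x) (v := v) (w := y)
  obtain ⟨q₁, hq₁⟩ := hT.1.exists_walk_length_eq_dist x w
  obtain ⟨q₂, hq₂⟩ := hT.1.exists_walk_length_eq_dist w y
  rw [T.dist_comm (u := v), T.dist_comm (u := w)] at hx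
  have hq : (q₁.append q₂).length = T.dist x y := by
    rw [SimpleGraph.Walk.length_append]; omega
  have hpq : p = q₁.append q₂ :=
    (hT.existsUnique_path x y).unique (p.isPath_of_length_eq_dist hp)
      (SimpleGraph.Walk.isPath_of_length_eq_dist _ hq)
  -- Both vertices sit at position `dist x v` of the common path.
  have hvp : p.getVert q₁.length = v := by
    have : q₁.length = (p.takeUntil v hv).length := by omega
    rw [this, SimpleGraph.Walk.getVert_length_takeUntil]
  rw [hpq, SimpleGraph.Walk.getVert_append] at hvp
  simpa using hvp.symm

/-- Any `k`-antiresolving set `S` in a finite tree `T` with `k ≥ 2` induces a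
connected subgraph of `T`. -/
theorem antiresolving_induces_connected {V : Type*} [Fintype V] (T : SimpleGraph V)
    (hT : T.IsTree) (S : Set V) (k : ℕ) (hk : 2 ≤ k)
    (hS : IsAntiresolving T S k) :
    (SimpleGraph.induce S T).Connected := by
  obtain ⟨⟨s₀, hs₀⟩, -, hcard, -⟩ := hS
  refine (SimpleGraph.connected_iff _).2 ⟨?_, ⟨⟨s₀, hs₀⟩⟩⟩
  rintro ⟨x, hx⟩ ⟨y, hy⟩
  obtain ⟨p, hp⟩ := hT.1.exists_walk_length_eq_dist x y
  have hpS : ∀ v ∈ p.support, v ∈ S := by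
    intro v hv
    by_contra hvS
    have hlt : 1 < (eqClass T S v).ncard := lt_of_lt_of_le hk (hcard v hvS)
    obtain ⟨w, hw, hne⟩ := Set.exists_ne_of_one_lt_ncard hlt v
    exact hne (eq_of_mem_support_of_dist_eq hT p hp hv (hw.2 x hx) (hw.2 y hy)).symm
  exact ⟨p.induce S hpS⟩
end

section
/- Let T be a finite tree with vertex set V and let S ⊂ V be a nonempty proper subset that induces a connected subgraph of T. Then every vertex x ∈ V \ S has a unique closest vertex v(x) ∈ S, and for all x, y ∈ V \ S, the vertices x and y have the same metric representation with respect to S if and only if v(x) = v(y) and dist_T(x, v(x)) = dist_T(y, v(y)). -/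
/-- In an acyclic graph every path is a geodesic, as it is the only path between its ends. -/
lemma length_eq_dist_of_isPath {V : Type*} {T : SimpleGraph V} (hT : T.IsAcyclic)
    {u v : V} {p : T.Walk u v} (hp : p.IsPath) : p.length = T.dist u v := by
  obtain ⟨q, hq, hql⟩ := p.reachable.exists_path_of_dist
  have h : p = q := congrArg Subtype.val ((hT.subsingleton_path u v).elim ⟨p, hp⟩ ⟨q, hq⟩)
  rw [h, hql]

/-- A connected induced subgraph contains a path of the ambient graph between any two of its
vertices. -/
lemma exists_isPath_support_subset {V : Type*} {T : SimpleGraph V} {S : Set V}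
    (hconn : (SimpleGraph.induce S T).Connected) {u v : V} (hu : u ∈ S) (hv : v ∈ S) :
    ∃ p : T.Walk u v, p.IsPath ∧ ∀ w ∈ p.support, w ∈ S := by
  obtain ⟨q, hq, -⟩ := hconn.exists_path_of_dist ⟨u, hu⟩ ⟨v, hv⟩
  refine ⟨q.map (SimpleGraph.Embedding.induce S).toHom,
    hq.map Subtype.val_injective, fun w hw => ?_⟩
  replace hw := (SimpleGraph.Walk.support_map _ q) ▸ hw
  rw [List.mem_map] at hw
  obtain ⟨a, -, rfl⟩ := hw
  exact a.2

/-- The gate identity for a closest vertex `v` of a connected set `S` in a tree. -/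
lemma dist_eq_add_of_closest {V : Type*} {T : SimpleGraph V} (hT : T.IsTree) {S : Set V}
    (hconn : (SimpleGraph.induce S T).Connected) {x v : V} (hv : v ∈ S)
    (hmin : ∀ w ∈ S, T.dist x v ≤ T.dist x w) {s : V} (hs : s ∈ S) :
    T.dist x s = T.dist x v + T.dist v s := by
  classical
  obtain ⟨p, hp, hpl⟩ := hT.connected.exists_path_of_dist x v
  obtain ⟨q, hq, hqS⟩ := exists_isPath_support_subset hconn hv hs
  -- A vertex `w ∈ S` on `p` is no closer to `x` than `v`, so `p` has length zero beyond `w`.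
  have hmeet : ∀ w ∈ p.support, w ∈ S → w = v := by
    intro w hw hwS
    have h1 := hmin w hwS
    have h2 := SimpleGraph.dist_le (p.takeUntil w hw)
    have h3 := congrArg SimpleGraph.Walk.length (p.take_spec hw)
    rw [SimpleGraph.Walk.length_append] at h3
    exact SimpleGraph.Walk.eq_of_length_eq_zero (p := p.dropUntil w hw) (by omega)
  have hpq : (p.append q).IsPath := by
    have hq' := hq.support_nodup
    rw [← SimpleGraph.Walk.cons_tail_support, List.nodup_cons] at hq'
    rw [SimpleGraph.Walk.isPath_def, SimpleGraph.Walk.support_append]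
    refine hp.support_nodup.append hq'.2 fun w hwp hwq => hq'.1 ?_
    exact hmeet w hwp (hqS w (List.mem_of_mem_tail hwq)) ▸ hwq
  rw [← length_eq_dist_of_isPath hT.isAcyclic hpq, SimpleGraph.Walk.length_append, hpl,
    length_eq_dist_of_isPath hT.isAcyclic hq]

/-- In a finite tree `T`, if a nonempty proper subset `S` of vertices induces a
connected subgraph, then every vertex outside `S` has a unique closest vertex in
`S`, and two vertices outside `S` have the same metric representation with
respect to `S` iff they have the same closest vertex of `S` and are at the same
distance from it. -/
theorem tree_connected_subset_rep {V : Type*} [Fintype V] (T : SimpleGraph V)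
    (hT : T.IsTree) (S : Set V) (hne : S.Nonempty) (hprop : S ≠ Set.univ)
    (hconn : (SimpleGraph.induce S T).Connected) :
    (∀ x, x ∉ S → ∃! v : V, v ∈ S ∧ ∀ w ∈ S, T.dist x v ≤ T.dist x w) ∧
    (∀ x, x ∉ S → ∀ y, y ∉ S →
      ∀ vx : V, (vx ∈ S ∧ ∀ w ∈ S, T.dist x vx ≤ T.dist x w) →
      ∀ vy : V, (vy ∈ S ∧ ∀ w ∈ S, T.dist y vy ≤ T.dist y w) →
      (sameRep T S x y ↔ (vx = vy ∧ T.dist x vx = T.dist y vy))) := by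
  refine ⟨fun x _ => ?_, fun x _ y _ vx hvx vy hvy => ⟨fun h => ?_, ?_⟩⟩
  · obtain ⟨v, hv, hmin⟩ := Set.exists_min_image S (T.dist x) S.toFinite hne
    refine ⟨v, ⟨hv, hmin⟩, fun w hw => ?_⟩
    have h1 := dist_eq_add_of_closest hT hconn hv hmin hw.1
    have h2 := hw.2 v hv
    exact (hT.connected.dist_eq_zero_iff.mp (by omega : T.dist v w = 0)).symm
  · have h1 := dist_eq_add_of_closest hT hconn hvx.1 hvx.2 hvy.1
    have h2 := dist_eq_add_of_closest hT hconn hvy.1 hvy.2 hvx.1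
    have h3 := h vx hvx.1
    have h4 := h vy hvy.1
    exact ⟨hT.connected.dist_eq_zero_iff.mp (by omega), by omega⟩
  · rintro ⟨rfl, h⟩ s hs
    rw [dist_eq_add_of_closest hT hconn hvx.1 hvx.2 hs,
      dist_eq_add_of_closest hT hconn hvy.1 hvy.2 hs, h]
end

section
/- Let T be a finite tree with vertex set V, let S ⊂ V be a k-antiresolving set of T with k ≥ 2, and let v ∈ S be a vertex with at least one neighbor outside S. Then the set Nbr(v) \ S of neighbors of v not in S is an equivalence class of the equal-metric-representation relation on V \ S; in particular |Nbr(v) \ S| ≥ k. -/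
/-- In a tree, at most one neighbor of `v` is closer to `s` than `v` is: prepending `v` to a
shortest path from such a neighbor gives the unique path from `v` to `s`. -/
lemma neighbor_toward_unique {V : Type*} {T : SimpleGraph V} (hT : T.IsTree) {v u w s : V}
    (hu : T.Adj v u) (hw : T.Adj v w) (hus : T.dist v s = T.dist u s + 1)
    (hws : T.dist v s = T.dist w s + 1) : u = w := by
  obtain ⟨p, hp⟩ := hT.connected.exists_walk_length_eq_dist u s
  obtain ⟨q, hq⟩ := hT.connected.exists_walk_length_eq_dist w s
  have hp' : (SimpleGraph.Walk.cons hu p).IsPath :=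
    SimpleGraph.Walk.isPath_of_length_eq_dist _ (by simp [hp, hus])
  have hq' : (SimpleGraph.Walk.cons hw q).IsPath :=
    SimpleGraph.Walk.isPath_of_length_eq_dist _ (by simp [hq, hws])
  have h := congrArg SimpleGraph.Walk.snd ((hT.existsUnique_path v s).unique hp' hq')
  simpa using h

lemma eqClass_subset_neighborSet {V : Type*} {T : SimpleGraph V} {S : Set V} {v u : V}
    (hv : v ∈ S) (hu : T.Adj v u) : eqClass T S u ⊆ T.neighborSet v \ S := by
  rintro w ⟨hwS, hw⟩
  refine ⟨?_, hwS⟩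
  have h := hw v hv
  rw [SimpleGraph.dist_eq_one_iff_adj.2 hu.symm] at h
  exact (SimpleGraph.dist_eq_one_iff_adj.1 h.symm).symm

/-- Leaving `S` through an edge at `v ∈ S` increases the distance to every vertex of `S`, as soon
as no vertex outside `S` is alone in its class. -/
lemma dist_of_adj_of_notMem {V : Type*} [Finite V] {T : SimpleGraph V} (hT : T.IsTree)
    {S : Set V} (hS : ∀ u ∉ S, 2 ≤ (eqClass T S u).ncard) {v u s : V} (hv : v ∈ S)
    (hs : s ∈ S) (hu : T.Adj v u) (huS : u ∉ S) : T.dist u s = T.dist v s + 1 := by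
  have h := hT.dist_eq_dist_add_one_of_adj s hu
  rw [T.dist_comm (u := s), T.dist_comm (u := s)] at h
  rcases h with h | h
  · obtain ⟨w, hw, hwu⟩ := Set.exists_ne_of_one_lt_ncard (hS u huS) u
    have hvw : T.Adj v w := (eqClass_subset_neighborSet hv hu hw).1
    exact absurd (neighbor_toward_unique hT hvw hu (hw.2 s hs ▸ h) h) hwu
  · exact h

/-- If `S` is a `k`-antiresolving set of a finite tree `T` with `k ≥ 2` and
`v ∈ S` has a neighbor outside `S`, then the set of neighbors of `v` outside `S`
is an equivalence class of the equal-metric-representation relation on the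
complement of `S`; in particular its cardinality is at least `k`. -/
theorem neighbors_outside_eqClass {V : Type*} [Fintype V] (T : SimpleGraph V)
    (hT : T.IsTree) (S : Set V) (k : ℕ) (hk : 2 ≤ k)
    (hS : IsAntiresolving T S k) (v : V) (hv : v ∈ S)
    (hnb : ∃ u, T.Adj v u ∧ u ∉ S) :
    (∃ u, u ∉ S ∧ eqClass T S u = T.neighborSet v \ S) ∧
    k ≤ (T.neighborSet v \ S).ncard := by
  obtain ⟨u, hu, huS⟩ := hnb
  have h2 : ∀ x ∉ S, 2 ≤ (eqClass T S x).ncard := fun x hx ↦ hk.trans (hS.2.2.1 x hx)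
  have heq : eqClass T S u = T.neighborSet v \ S := by
    refine (eqClass_subset_neighborSet hv hu).antisymm fun w hw ↦ ⟨hw.2, fun s hs ↦ ?_⟩
    rw [dist_of_adj_of_notMem hT h2 hv hs hu huS, dist_of_adj_of_notMem hT h2 hv hs hw.1 hw.2]
  exact ⟨⟨u, huS, heq⟩, heq ▸ hS.2.2.1 u huS⟩
end

section
/- Let T be a finite tree with vertex set V, let S ⊂ V be a k-antiresolving set of T with k ≥ 2, let v ∈ S have a neighbor outside S, and let A_1 = Nbr(v) \ S. Then the set A_2 = (⋃_{u ∈ A_1} Nbr(u)) \ {v} is contained in V \ S, and if A_2 is nonempty then A_2 is an equivalence class of the equal-metric-representation relation on V \ S; in particular |A_2| ≥ k whenever A_2 is nonempty. -/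
/-- Both `a` and `b` are second vertices of paths from `x` to `s`, and there is only
one such path. -/
theorem IsTree.closer_nbr_unique {V : Type*} {T : SimpleGraph V} (hT : T.IsTree) {s x a b : V}
    (ha : T.Adj x a) (hb : T.Adj x b) (hda : T.dist x s = T.dist a s + 1)
    (hdb : T.dist x s = T.dist b s + 1) : a = b := by
  obtain ⟨p, hp⟩ := hT.connected.exists_walk_length_eq_dist a s
  obtain ⟨q, hq⟩ := hT.connected.exists_walk_length_eq_dist b s
  have hp' : (SimpleGraph.Walk.cons ha p).IsPath :=
    SimpleGraph.Walk.isPath_of_length_eq_dist _ (by simp [hp, hda])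
  have hq' : (SimpleGraph.Walk.cons hb q).IsPath :=
    SimpleGraph.Walk.isPath_of_length_eq_dist _ (by simp [hq, hdb])
  have h := congrArg SimpleGraph.Walk.snd ((hT.existsUnique_path x s).unique hp' hq')
  simpa using h

theorem first_layer_dist {V : Type*} [Finite V] {T : SimpleGraph V} (hT : T.IsTree) {S : Set V}
    {k : ℕ} (hk : 2 ≤ k) (hS : IsAntiresolving T S k) {v u s : V} (hv : v ∈ S) (hvu : T.Adj v u)
    (hu : u ∉ S) (hs : s ∈ S) : T.dist u s = T.dist v s + 1 := by
  have hcard : 1 < (eqClass T S u).ncard := lt_of_lt_of_le hk (hS.2.2.1 u hu)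
  obtain ⟨u', ⟨-, hrep⟩, hne⟩ := Set.exists_ne_of_one_lt_ncard hcard u
  have hvu' : T.Adj v u' := by
    rw [← SimpleGraph.dist_eq_one_iff_adj, SimpleGraph.dist_comm, ← hrep v hv,
      SimpleGraph.dist_comm, SimpleGraph.dist_eq_one_iff_adj]
    exact hvu
  have h := hT.dist_eq_dist_add_one_of_adj s hvu
  rw [SimpleGraph.dist_comm (u := s), SimpleGraph.dist_comm (u := s)] at h
  rcases h with h | h
  · exact absurd (IsTree.closer_nbr_unique hT hvu' hvu (by rw [← hrep s hs, h]) h) hne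
  · exact h

theorem second_layer_dist {V : Type*} [Finite V] {T : SimpleGraph V} (hT : T.IsTree) {S : Set V}
    {k : ℕ} (hk : 2 ≤ k) (hS : IsAntiresolving T S k) {v u w s : V} (hv : v ∈ S)
    (hvu : T.Adj v u) (hu : u ∉ S) (huw : T.Adj u w) (hwv : w ≠ v) (hs : s ∈ S) :
    T.dist w s = T.dist v s + 2 := by
  have h1 := first_layer_dist hT hk hS hv hvu hu hs
  have h := hT.dist_eq_dist_add_one_of_adj s huw
  rw [SimpleGraph.dist_comm (u := s), SimpleGraph.dist_comm (u := s)] at h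
  rcases h with h | h
  · exact absurd (IsTree.closer_nbr_unique hT huw hvu.symm h h1) hwv
  · omega

/-- If `S` is a `k`-antiresolving set of a finite tree `T` with `k ≥ 2`, `v ∈ S`
has a neighbor outside `S`, and `A₁` is the set of neighbors of `v` outside `S`,
then `A₂ = (⋃ u ∈ A₁, Nbr(u)) \ {v}` is contained in the complement of `S`, and
if nonempty it is an equivalence class of the equal-metric-representation
relation on the complement of `S`; in particular its cardinality is at least `k`
whenever it is nonempty. -/
theorem second_layer_eqClass {V : Type*} [Fintype V] (T : SimpleGraph V)
    (hT : T.IsTree) (S : Set V) (k : ℕ) (hk : 2 ≤ k)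
    (hS : IsAntiresolving T S k) (v : V) (hv : v ∈ S)
    (hnb : ∃ u, T.Adj v u ∧ u ∉ S) :
    ∀ A₂ : Set V,
      A₂ = (⋃ u ∈ T.neighborSet v \ S, T.neighborSet u) \ {v} →
      A₂ ⊆ Sᶜ ∧
      (A₂.Nonempty → (∃ u, u ∉ S ∧ eqClass T S u = A₂) ∧ k ≤ A₂.ncard) := by
  rintro A₂ rfl
  have key : ∀ w ∈ (⋃ u ∈ T.neighborSet v \ S, T.neighborSet u) \ {v}, ∀ s ∈ S,
      T.dist w s = T.dist v s + 2 := by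
    rintro w ⟨hw, hwv⟩ s hs
    simp only [Set.mem_iUnion, exists_prop] at hw
    obtain ⟨u, ⟨hvu, hu⟩, huw⟩ := hw
    exact second_layer_dist hT hk hS hv hvu hu huw hwv hs
  have hsub : (⋃ u ∈ T.neighborSet v \ S, T.neighborSet u) \ {v} ⊆ Sᶜ := by
    intro w hw hwS
    have := key w hw w hwS
    simp at this
  refine ⟨hsub, ?_⟩
  rintro ⟨w, hw⟩
  have hclass : eqClass T S w = (⋃ u ∈ T.neighborSet v \ S, T.neighborSet u) \ {v} := by
    apply Set.Subset.antisymm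
    · rintro x ⟨hx, hrep⟩
      have hxv : T.dist x v = 2 := by rw [← hrep v hv, key w hw v hv]; simp
      obtain ⟨p, hp⟩ := hT.connected.exists_walk_length_eq_dist x v
      rw [hxv] at hp
      match p, hp with
      | .cons (v := m) hxm (.cons hmv .nil), _ =>
        refine ⟨?_, fun h => hx (by rw [Set.mem_singleton_iff.mp h]; exact hv)⟩
        simp only [Set.mem_iUnion, exists_prop]
        refine ⟨m, ⟨hmv.symm, fun hmS => ?_⟩, hxm.symm⟩
        have h := hrep m hmS
        rw [key w hw m hmS, SimpleGraph.dist_eq_one_iff_adj.mpr hxm] at h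
        omega
    · intro x hx
      exact ⟨hsub hx, fun s hs => by rw [key w hw s hs, key x hx s hs]⟩
  exact ⟨⟨w, hsub hw, hclass⟩, hclass ▸ hS.2.2.1 w (hsub hw)⟩
end
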